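/- arXiv:1303.7471 — 2 statements merged into one kernel-verified Lean document; each statement's English description precedes it below -/
import Mathlib

section
/- For every ε > 0 there exists a constant C_ε > 0 such that for every integer k ≥ 1 and every β ∈ ℂ with dist(β, −ℕ₀) ≥ ε, one has |Γ(β)Γ(k)/Γ(β+k)| ≤ C_ε · 2^k. -/
/-- The set of nonpositive integers `−ℕ₀ = {0, −1, −2, …}` in `ℂ`. -/
def negNat0 : Set ℂ := {w : ℂ | ∃ m : ℕ, w = -(m : ℂ)}

/-!
For a fixed integer `n`, the beta function `s ↦ B(s, n + 1)` is up to sign the `n`-th forward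
difference of `s ↦ B(s, 1) = 1 / s`. An `n`-th difference is a signed sum of `2 ^ n` values, here
at `s, s + 1, …, s + n`, and these have modulus at most `1 / ε` when `s` keeps distance `ε` from
the poles `0, -1, -2, …`.
-/

section fwdDiff

open scoped fwdDiff

variable {M E : Type*} [AddCommMonoid M] [SeminormedAddCommGroup E]

theorem norm_fwdDiff_iter_le {h : M} {f : M → E} {C : ℝ} (n : ℕ) {y : M}
    (hf : ∀ j ≤ n, ‖f (y + j • h)‖ ≤ C) : ‖(Δ_[h])^[n] f y‖ ≤ 2 ^ n * C := by
  induction n generalizing y with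
  | zero => simpa using hf 0 le_rfl
  | succ n ih =>
    have hshift : ∀ j ≤ n, ‖f (y + h + j • h)‖ ≤ C := fun j hj => by
      simpa only [add_assoc, succ_nsmul'] using hf (j + 1) (by lia)
    calc ‖(Δ_[h])^[n + 1] f y‖ = ‖(Δ_[h])^[n] f (y + h) - (Δ_[h])^[n] f y‖ := by
          rw [Function.iterate_succ_apply', fwdDiff]
      _ ≤ 2 ^ n * C + 2 ^ n * C :=
          norm_sub_le_of_le (ih hshift) (ih fun j hj => hf j (by lia))
      _ = 2 ^ (n + 1) * C := by ring

end fwdDiff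

theorem infDist_negNat0_le_norm_add_natCast (s : ℂ) (m : ℕ) :
    Metric.infDist s negNat0 ≤ ‖s + m‖ := by
  have hm : -(m : ℂ) ∈ negNat0 := ⟨m, rfl⟩
  simpa only [dist_eq_norm, sub_neg_eq_add] using Metric.infDist_le_dist_of_mem hm

section eulerBeta

open Complex
open scoped fwdDiff

/-- The beta function `B(s, t) = Γ(s) Γ(t) / Γ(s + t)` on all of `ℂ × ℂ`; it agrees with
`Complex.betaIntegral s t` when both real parts are positive. At a pole of `Γ(s)`, `Γ(t)` or
`Γ(s + t)` its value is `0`, as `Complex.Gamma` vanishes there. -/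
noncomputable def eulerBeta (s t : ℂ) : ℂ :=
  Gamma s * Gamma t / Gamma (s + t)

theorem eulerBeta_one_right {s : ℂ} (hs : ∀ m : ℕ, s ≠ -m) : eulerBeta s 1 = s⁻¹ := by
  have hs0 : s ≠ 0 := by simpa using hs 0
  rw [eulerBeta, Gamma_one, mul_one, Gamma_add_one s hs0,
    div_mul_cancel_right₀ (Gamma_ne_zero hs)]

theorem eulerBeta_add_one_right {s t : ℂ} (hs : s ≠ 0) (ht : t ≠ 0) :
    eulerBeta s (t + 1) = eulerBeta s t - eulerBeta (s + 1) t := by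
  simp only [eulerBeta, div_eq_mul_inv]
  rw [one_div_Gamma_eq_self_mul_one_div_Gamma_add_one (s + t), Gamma_add_one s hs,
    Gamma_add_one t ht, add_right_comm s 1 t, ← add_assoc s t 1]
  ring

theorem eulerBeta_natCast_add_one_right (n : ℕ) {s : ℂ} (hs : ∀ m : ℕ, s ≠ -m) :
    eulerBeta s (n + 1) = (-1) ^ n * (Δ_[1])^[n] (·⁻¹) s := by
  induction n generalizing s with
  | zero => simpa using eulerBeta_one_right hs
  | succ n ih =>
    have hs0 : s ≠ 0 := by simpa using hs 0
    have hshift (m : ℕ) : s + 1 ≠ -m := fun h =>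
      hs (m + 1) (by push_cast; linear_combination h)
    calc eulerBeta s ((n + 1 : ℕ) + 1)
        = eulerBeta s (n + 1) - eulerBeta (s + 1) (n + 1) := by
          rw [Nat.cast_succ, eulerBeta_add_one_right hs0 n.cast_add_one_ne_zero]
      _ = (-1) ^ (n + 1) * ((Δ_[1])^[n] (·⁻¹) (s + 1) - (Δ_[1])^[n] (·⁻¹) s) := by
          rw [ih hs, ih hshift]; ring
      _ = (-1) ^ (n + 1) * (Δ_[1])^[n + 1] (·⁻¹) s := by
          rw [Function.iterate_succ_apply', fwdDiff]

theorem norm_eulerBeta_natCast_add_one_right_le {ε : ℝ} (hε : 0 < ε) {s : ℂ}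
    (hs : ε ≤ Metric.infDist s negNat0) (n : ℕ) :
    ‖eulerBeta s (n + 1)‖ ≤ 2 ^ n * ε⁻¹ := by
  have hdist (m : ℕ) : ε ≤ ‖s + m‖ := hs.trans (infDist_negNat0_le_norm_add_natCast s m)
  have hpole (m : ℕ) : s ≠ -m := fun h =>
    norm_pos_iff.mp (hε.trans_le (hdist m)) (eq_neg_iff_add_eq_zero.mp h)
  have hinv : ∀ j ≤ n, ‖(s + j • (1 : ℂ))⁻¹‖ ≤ ε⁻¹ := fun j _ => by
    rw [nsmul_one, norm_inv]
    exact inv_anti₀ hε (hdist j)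
  calc ‖eulerBeta s (n + 1)‖ = ‖(Δ_[1])^[n] (·⁻¹) s‖ := by
        simp [eulerBeta_natCast_add_one_right n hpole]
    _ ≤ 2 ^ n * ε⁻¹ := norm_fwdDiff_iter_le n hinv

end eulerBeta

theorem stmt_5 (ε : ℝ) (hε : 0 < ε) :
    ∃ C : ℝ, 0 < C ∧ ∀ k : ℕ, 1 ≤ k → ∀ β : ℂ,
      ε ≤ Metric.infDist β negNat0 →
      ‖Complex.Gamma β * Complex.Gamma (k : ℂ) / Complex.Gamma (β + k)‖ ≤ C * 2 ^ k := by
  refine ⟨ε⁻¹, inv_pos.mpr hε, fun k hk β hβ => ?_⟩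
  obtain ⟨n, rfl⟩ := Nat.exists_eq_add_of_le' hk
  calc ‖eulerBeta β (n + 1 : ℕ)‖ ≤ 2 ^ n * ε⁻¹ := by
        simpa only [Nat.cast_succ] using norm_eulerBeta_natCast_add_one_right_le hε hβ n
    _ ≤ 2 ^ (n + 1) * ε⁻¹ := by gcongr <;> simp
    _ = ε⁻¹ * 2 ^ (n + 1) := mul_comm _ _
end

section
/- Let n ∈ ℕ and ε > 0. Then there exist C > 0 and m ∈ ℕ such that for every s ∈ ℂ with dist(s, (n/2 − ℕ) ∪ (−ℕ₀)) > ε and every τ ∈ ℂ with |τ| > 1, the series ∑_{j=0}^∞ [Γ(s+2j)/(Γ(s − n/2 + 1 + j)·Γ(j+1))]·(2τ)^{−2j} converges absolutely and satisfies |∑_{j=0}^∞ Γ(s+2j)/(Γ(s−n/2+1+j)Γ(j+1))·(2τ)^{−2j}| ≤ e^{C(1+|s|)}·min(|τ| − 1, 1)^{−m}. -/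
/-- The set `(n/2 − ℕ) ∪ (−ℕ₀)` in `ℂ`. -/
def polesSet (n : ℕ) : Set ℂ :=
  {w : ℂ | ∃ l : ℕ, 1 ≤ l ∧ w = (n : ℂ) / 2 - l} ∪ {w : ℂ | ∃ l : ℕ, w = -(l : ℂ)}

/-!
Since `Γ(s + 2j) / (Γ(s + j) j!)` is the generalised binomial coefficient `(s + j)(s + j + 1) ⋯
(s + 2j - 1) / j!`, the triangle inequality bounds it by the ordinary binomial coefficient
`(N + 2j - 1).choose j ≤ 2 ^ N * 4 ^ j` for any natural number `N ≥ |s|`. This leaves the quotient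
`Γ(s + j) / Γ(s - n/2 + 1 + j)`. For `Re u, Re c ≥ 1` the Beta integral gives
`|Γ(u) / Γ(u + c)| ≤ |1 / Γ(c)|`; the functional equation carries this to the rest of the plane at
the cost of a bounded factor for each unit step, about `|s|` of them, as well as to `Re c < 1` at
the cost of a polynomial in `s` and `j`. Hence the coefficients are at most
`exp (C (1 + |s|)) (j + 1) ^ K 4 ^ j`, and the series is dominated by
`∑ (j + 1) ^ K |τ| ^ (-2j) = O((1 - |τ| ^ (-2)) ^ (-(K + 1)))`.
-/

section Pochhammer

open scoped Nat

theorem norm_eval_ascPochhammer_le {R : Type*} [SeminormedRing R] [NormOneClass R] {z : R} {N : ℕ}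
    (hz : ‖z‖ ≤ N) (k : ℕ) : ‖(ascPochhammer R k).eval z‖ ≤ N.ascFactorial k := by
  induction k with
  | zero => simp
  | succ k ih =>
    have hzk : ‖z + k‖ ≤ N + k :=
      (norm_add_le _ _).trans (add_le_add hz (by simpa using Nat.norm_cast_le (α := R) k))
    rw [ascPochhammer_succ_eval, Nat.ascFactorial_succ, Nat.cast_mul, mul_comm (Nat.cast _)]
    push_cast
    exact (norm_mul_le _ _).trans (by gcongr)

theorem add_ascFactorial_le_factorial_mul_two_pow (N j : ℕ) :
    (N + j).ascFactorial j ≤ j ! * 2 ^ (N + 2 * j) := by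
  rw [Nat.ascFactorial_eq_factorial_mul_choose']
  gcongr
  exact (Nat.choose_le_two_pow _ _).trans (Nat.pow_le_pow_right two_pos (by omega))

end Pochhammer

section GammaQuotient

open Complex
open scoped Nat

theorem norm_Gamma_add_two_mul_le {s : ℂ} {N : ℕ} (hs : ∀ k : ℕ, s ≠ -k) (hN : ‖s‖ ≤ N) (j : ℕ) :
    ‖Gamma (s + 2 * j)‖ ≤ ‖Gamma (s + j)‖ * (j ! * 2 ^ (N + 2 * j)) := by
  have hsj : ∀ k : ℕ, s + j ≠ -k := fun k hk => hs (j + k) <| by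
    push_cast
    linear_combination hk
  have hnorm : ‖s + j‖ ≤ (N + j : ℕ) := by
    simpa using (norm_add_le s (j : ℂ)).trans (add_le_add_left hN _)
  have hquot : Gamma (s + 2 * j) = Gamma (s + j) * (ascPochhammer ℂ j).eval (s + j) := by
    rw [← Gamma_add_nat_div_Gamma_eq _ hsj, mul_div_cancel₀ _ (Gamma_ne_zero hsj)]
    ring_nf
  rw [hquot, norm_mul]
  gcongr
  exact (norm_eval_ascPochhammer_le hnorm j).trans
    (mod_cast add_ascFactorial_le_factorial_mul_two_pow N j)

theorem norm_betaIntegral_le_one {u v : ℂ} (hu : 1 ≤ u.re) (hv : 1 ≤ v.re) :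
    ‖betaIntegral u v‖ ≤ 1 := by
  have hintegrand : ∀ᵐ x : ℝ, x ∈ Set.uIoc 0 1 →
      ‖(x : ℂ) ^ (u - 1) * (1 - (x : ℂ)) ^ (v - 1)‖ ≤ 1 := by
    filter_upwards [MeasureTheory.Measure.ae_ne MeasureTheory.volume 1] with x hx_ne hx
    rw [Set.uIoc_of_le zero_le_one] at hx
    have hx0 : 0 < x := hx.1
    have hx1 : x < 1 := hx.2.lt_of_ne hx_ne
    rw [norm_mul, ← ofReal_one, ← ofReal_sub, norm_cpow_eq_rpow_re_of_pos hx0,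
      norm_cpow_eq_rpow_re_of_pos (sub_pos.mpr hx1)]
    exact mul_le_one₀ (Real.rpow_le_one hx0.le hx1.le (by simpa using hu))
      (Real.rpow_nonneg (sub_nonneg.mpr hx1.le) _)
      (Real.rpow_le_one (sub_nonneg.mpr hx1.le) (sub_le_self _ hx0.le) (by simpa using hv))
  simpa [betaIntegral] using
    intervalIntegral.norm_integral_le_of_norm_le_const_ae hintegrand

theorem norm_Gamma_div_Gamma_add_le_of_one_le_re {u c : ℂ} (hu : 1 ≤ u.re) (hc : 1 ≤ c.re) :
    ‖Gamma u / Gamma (u + c)‖ ≤ ‖(Gamma c)⁻¹‖ := by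
  have hu0 : 0 < u.re := one_pos.trans_le hu
  have hc0 : 0 < c.re := one_pos.trans_le hc
  have hbeta : Gamma u / Gamma (u + c) = betaIntegral u c * (Gamma c)⁻¹ := by
    rw [betaIntegral_eq_Gamma_mul_div u c hu0 hc0]
    field_simp [Gamma_ne_zero_of_re_pos hc0]
  rw [hbeta, norm_mul]
  exact mul_le_of_le_one_left (norm_nonneg _) (norm_betaIntegral_le_one hu hc)

theorem Gamma_div_Gamma_add_eq_mul {s : ℂ} (hs : s ≠ 0) (c : ℂ) :
    Gamma s / Gamma (s + c) = (1 + c / s) * (Gamma (s + 1) / Gamma (s + 1 + c)) := by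
  rw [div_eq_mul_inv, one_div_Gamma_eq_self_mul_one_div_Gamma_add_one (s + c), Gamma_add_one s hs,
    add_right_comm]
  field_simp

theorem norm_Gamma_div_Gamma_add_le {ε : ℝ} (hε : 0 < ε) {c : ℂ} (hc : 1 ≤ c.re) {s : ℂ}
    (hs : ∀ l : ℕ, ε ≤ ‖s + l‖) {N : ℕ} (hN : 1 ≤ s.re + N) :
    ‖Gamma s / Gamma (s + c)‖ ≤ (1 + ‖c‖ / ε) ^ N * ‖(Gamma c)⁻¹‖ := by
  induction N generalizing s with
  | zero => simpa using norm_Gamma_div_Gamma_add_le_of_one_le_re (by simpa using hN) hc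
  | succ N ih =>
    have hs0 : ε ≤ ‖s‖ := by simpa using hs 0
    have hfactor : ‖1 + c / s‖ ≤ 1 + ‖c‖ / ε := by
      refine (norm_add_le _ _).trans ?_
      rw [norm_one, norm_div]
      gcongr
    have hnext : ‖Gamma (s + 1) / Gamma (s + 1 + c)‖ ≤ (1 + ‖c‖ / ε) ^ N * ‖(Gamma c)⁻¹‖ := by
      refine ih (fun l => ?_) ?_
      · simpa [add_assoc, add_comm (1 : ℂ)] using hs (l + 1)
      · push_cast at hN
        rw [add_re, one_re]
        linarith
    rw [Gamma_div_Gamma_add_eq_mul (norm_pos_iff.mp (hε.trans_le hs0)), norm_mul, pow_succ',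
      mul_assoc]
    gcongr

theorem inv_Gamma_eq_eval_ascPochhammer_mul (w : ℂ) (k : ℕ) :
    (Gamma w)⁻¹ = (ascPochhammer ℂ k).eval w * (Gamma (w + k))⁻¹ := by
  induction k with
  | zero => simp
  | succ k ih =>
    rw [ih, one_div_Gamma_eq_self_mul_one_div_Gamma_add_one (w + k), ascPochhammer_succ_eval]
    push_cast
    ring_nf

theorem exists_norm_eval_ascPochhammer_add_le (b : ℂ) (k : ℕ) :
    ∃ A : ℝ, 0 ≤ A ∧ ∀ (s : ℂ) (N j : ℕ), ‖s‖ + 1 ≤ N →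
      ‖(ascPochhammer ℂ k).eval (s + b + j)‖ ≤ A * (2 ^ k) ^ N * ((j : ℝ) + 1) ^ k := by
  set L : ℕ := ⌈‖b‖⌉₊
  refine ⟨k ! * (L + 1) ^ k, by positivity, fun s N j hN => ?_⟩
  have hN1 : (1 : ℝ) ≤ N := by linarith [norm_nonneg s]
  have hnorm : ‖s + b + j‖ ≤ (N + L + j : ℕ) := by
    push_cast
    refine norm_add₃_le.trans ?_
    rw [norm_natCast]
    linarith [Nat.le_ceil ‖b‖]
  have hsum : (N : ℝ) + L + j ≤ (L + 1) * 2 ^ N * (j + 1) := by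
    have hN2 : (N : ℝ) ≤ 2 ^ N := mod_cast N.lt_two_pow_self.le
    have hLj : (0 : ℝ) ≤ L * j := by positivity
    calc (N : ℝ) + L + j ≤ (L + 1) * N * (j + 1) := by nlinarith
      _ ≤ (L + 1) * 2 ^ N * (j + 1) := by gcongr
  calc ‖(ascPochhammer ℂ k).eval (s + b + j)‖
      ≤ ((N + L + j).ascFactorial k : ℕ) := norm_eval_ascPochhammer_le hnorm k
    _ ≤ k ! * ((N : ℝ) + L + j) ^ k :=
        mod_cast Nat.ascFactorial_le_factorial_mul_pow (N + L + j) k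
    _ ≤ k ! * ((L + 1) * 2 ^ N * (j + 1)) ^ k := by gcongr
    _ = k ! * (L + 1) ^ k * (2 ^ k) ^ N * ((j : ℝ) + 1) ^ k := by
        rw [mul_pow, mul_pow, pow_right_comm 2 k N]
        ring

theorem exists_norm_Gamma_add_div_Gamma_add_le (b : ℂ) {ε : ℝ} (hε : 0 < ε) :
    ∃ A B : ℝ, 0 ≤ A ∧ 0 ≤ B ∧ ∃ K : ℕ, ∀ (s : ℂ) (N j : ℕ), (∀ l : ℕ, ε ≤ ‖s + l‖) →
      ‖s‖ + 1 ≤ N → ‖Gamma (s + j) / Gamma (s + b + j)‖ ≤ A * B ^ N * ((j : ℝ) + 1) ^ K := by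
  obtain ⟨K, hK⟩ := exists_nat_ge (1 - b.re)
  obtain ⟨A, hA, hpoch⟩ := exists_norm_eval_ascPochhammer_add_le b K
  set c : ℂ := b + K
  have hc : 1 ≤ c.re := by
    rw [add_re, natCast_re]
    linarith
  refine ⟨A * ‖(Gamma c)⁻¹‖, 2 ^ K * (1 + ‖c‖ / ε), by positivity, by positivity, K,
    fun s N j hs hN => ?_⟩
  have hquot : ‖Gamma (s + j) / Gamma (s + j + c)‖ ≤ (1 + ‖c‖ / ε) ^ N * ‖(Gamma c)⁻¹‖ := by
    refine norm_Gamma_div_Gamma_add_le hε hc (fun l => ?_) ?_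
    · simpa [add_assoc] using hs (j + l)
    · rw [add_re, natCast_re]
      linarith [neg_le_of_abs_le (abs_re_le_norm s), j.cast_nonneg (α := ℝ)]
  have hshift : Gamma (s + j) / Gamma (s + b + j) =
      (ascPochhammer ℂ K).eval (s + b + j) * (Gamma (s + j) / Gamma (s + j + c)) := by
    rw [div_eq_mul_inv, inv_Gamma_eq_eval_ascPochhammer_mul (s + b + j) K,
      show s + b + j + K = s + j + c by ring]
    ring
  rw [hshift, norm_mul]
  calc _ ≤ A * (2 ^ K) ^ N * ((j : ℝ) + 1) ^ K * ((1 + ‖c‖ / ε) ^ N * ‖(Gamma c)⁻¹‖) :=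
        mul_le_mul (hpoch s N j hN) hquot (norm_nonneg _) (by positivity)
    _ = _ := by
        rw [mul_pow (2 ^ K)]
        ring

/-- The coefficient of `(2τ) ^ (-2j)` in the expansion of the resolvent kernel; the case `α = n / 2`
is that of hyperbolic `(n + 1)`-space. Where `Γ(s - α + 1 + j)` has a pole, Mathlib's conventions
`Γ = 0` and `x / 0 = 0` give the value `0`, the correct one since `1 / Γ` is entire and vanishes
there. -/
noncomputable def resolventCoeff (α s : ℂ) (j : ℕ) : ℂ :=
  Gamma (s + 2 * j) / (Gamma (s - α + 1 + j) * Gamma ((j : ℂ) + 1))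

theorem exists_norm_resolventCoeff_le (α : ℂ) {ε : ℝ} (hε : 0 < ε) :
    ∃ A B : ℝ, 0 ≤ A ∧ 0 ≤ B ∧ ∃ K : ℕ, ∀ (s : ℂ) (N j : ℕ), (∀ l : ℕ, ε ≤ ‖s + l‖) →
      ‖s‖ + 1 ≤ N → ‖resolventCoeff α s j‖ ≤ A * B ^ N * ((j : ℝ) + 1) ^ K * 4 ^ j := by
  obtain ⟨A, B, hA, hB, K, hquot⟩ := exists_norm_Gamma_add_div_Gamma_add_le (1 - α) hε
  refine ⟨A, B * 2, hA, by positivity, K, fun s N j hs hN => ?_⟩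
  have hpoles : ∀ k : ℕ, s ≠ -k := fun k hk => by
    simpa [hk, hε.not_ge] using hs k
  have hquot' := hquot s N j hs hN
  rw [show s + (1 - α) + j = s - α + 1 + j by ring, norm_div] at hquot'
  rw [resolventCoeff, Gamma_nat_eq_factorial, norm_div, norm_mul, norm_natCast]
  calc ‖Gamma (s + 2 * j)‖ / (‖Gamma (s - α + 1 + j)‖ * j !)
      ≤ ‖Gamma (s + j)‖ * (j ! * 2 ^ (N + 2 * j)) / (‖Gamma (s - α + 1 + j)‖ * j !) := by
        gcongr
        exact norm_Gamma_add_two_mul_le hpoles (by linarith) j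
    _ = ‖Gamma (s + j)‖ / ‖Gamma (s - α + 1 + j)‖ * 2 ^ (N + 2 * j) := by
        rw [mul_left_comm, mul_comm _ (j ! : ℝ), mul_div_mul_left _ _ (by positivity)]
        ring
    _ ≤ A * B ^ N * ((j : ℝ) + 1) ^ K * 2 ^ (N + 2 * j) := by gcongr
    _ = A * (B * 2) ^ N * ((j : ℝ) + 1) ^ K * 4 ^ j := by
        rw [pow_add, pow_mul, mul_pow]
        norm_num
        ring

end GammaQuotient

section PowerSeries

open scoped Nat

theorem add_one_pow_le_factorial_mul_choose (K j : ℕ) :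
    (j + 1) ^ K ≤ K ! * (j + K).choose K := by
  rw [← Nat.ascFactorial_eq_factorial_mul_choose]
  exact Nat.pow_succ_le_ascFactorial (j + 1) K

theorem summable_norm_and_norm_tsum_le_of_norm_le_pow_mul_geometric {E : Type*}
    [SeminormedAddCommGroup E] {f : ℕ → E} {A x : ℝ} {K : ℕ} (hA : 0 ≤ A) (hx0 : 0 ≤ x)
    (hx1 : x < 1) (hf : ∀ j : ℕ, ‖f j‖ ≤ A * ((j : ℝ) + 1) ^ K * x ^ j) :
    Summable (fun j => ‖f j‖) ∧ ‖∑' j, f j‖ ≤ A * K ! / (1 - x) ^ (K + 1) := by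
  have hsum : HasSum (fun j : ℕ => A * K ! * ((j + K).choose K * x ^ j))
      (A * K ! / (1 - x) ^ (K + 1)) := by
    simpa [div_eq_mul_inv] using (hasSum_choose_mul_geometric_of_norm_lt_one K
      (by rwa [Real.norm_of_nonneg hx0] : ‖x‖ < 1)).mul_left (A * K !)
  have hterm : ∀ j : ℕ, ‖f j‖ ≤ A * K ! * ((j + K).choose K * x ^ j) := fun j => by
    calc ‖f j‖ ≤ A * ((j : ℝ) + 1) ^ K * x ^ j := hf j
      _ ≤ A * (K ! * (j + K).choose K) * x ^ j := by
          gcongr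
          exact mod_cast add_one_pow_le_factorial_mul_choose K j
      _ = _ := by ring
  exact ⟨.of_nonneg_of_le (fun _ => norm_nonneg _) hterm hsum.summable,
    tsum_of_norm_bounded hsum hterm⟩

theorem min_sub_one_one_div_two_le_one_sub_inv_sq {ρ : ℝ} (hρ : 1 < ρ) :
    min (ρ - 1) 1 / 2 ≤ 1 - (ρ ^ 2)⁻¹ := by
  set μ := min (ρ - 1) 1
  have hμρ : μ ≤ ρ - 1 := min_le_left _ _
  have hμ1 : μ ≤ 1 := min_le_right _ _
  have hμ0 : 0 < μ := lt_min (sub_pos.mpr hρ) one_pos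
  have hinv : (ρ ^ 2)⁻¹ ≤ (1 + μ)⁻¹ := inv_anti₀ (by linarith) (by nlinarith)
  have hinv' : (1 + μ)⁻¹ ≤ 1 - μ / 2 := by
    rw [inv_le_iff_one_le_mul₀ (by linarith)]
    nlinarith
  linarith

theorem norm_two_mul_zpow_neg_two_mul (τ : ℂ) (j : ℕ) :
    ‖(2 * τ) ^ (-(2 * (j : ℤ)))‖ = (4 ^ j)⁻¹ * (‖τ‖ ^ 2)⁻¹ ^ j := by
  rw [norm_zpow, norm_mul, Complex.norm_ofNat, zpow_neg, zpow_mul, zpow_natCast, zpow_ofNat,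
    mul_pow, mul_pow, mul_inv, inv_pow]
  norm_num

theorem summable_norm_and_norm_tsum_mul_zpow_le {a : ℕ → ℂ} {A : ℝ} {K : ℕ} (hA : 0 ≤ A)
    (ha : ∀ j : ℕ, ‖a j‖ ≤ A * ((j : ℝ) + 1) ^ K * 4 ^ j) {τ : ℂ} (hτ : 1 < ‖τ‖) :
    Summable (fun j : ℕ => ‖a j * (2 * τ) ^ (-(2 * (j : ℤ)))‖) ∧
      ‖∑' j : ℕ, a j * (2 * τ) ^ (-(2 * (j : ℤ)))‖ ≤
        A * (K ! * 2 ^ (K + 1)) * (min (‖τ‖ - 1) 1 ^ (K + 1))⁻¹ := by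
  have hterm : ∀ j : ℕ, ‖a j * (2 * τ) ^ (-(2 * (j : ℤ)))‖ ≤
      A * ((j : ℝ) + 1) ^ K * (‖τ‖ ^ 2)⁻¹ ^ j := fun j => by
    rw [norm_mul, norm_two_mul_zpow_neg_two_mul, ← mul_assoc, ← div_eq_mul_inv]
    gcongr
    rw [div_le_iff₀ (by positivity)]
    exact ha j
  obtain ⟨hsummable, hle⟩ := summable_norm_and_norm_tsum_le_of_norm_le_pow_mul_geometric hA
    (by positivity) (inv_lt_one_of_one_lt₀ (one_lt_pow₀ hτ two_ne_zero)) hterm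
  refine ⟨hsummable, hle.trans ?_⟩
  have hμ : 0 < min (‖τ‖ - 1) 1 := lt_min (sub_pos.mpr hτ) one_pos
  calc A * K ! / (1 - (‖τ‖ ^ 2)⁻¹) ^ (K + 1)
      ≤ A * K ! / (min (‖τ‖ - 1) 1 / 2) ^ (K + 1) := by
        gcongr
        exact min_sub_one_one_div_two_le_one_sub_inv_sq hτ
    _ = _ := by
        rw [div_pow]
        field_simp

end PowerSeries

theorem exists_mul_pow_ceil_add_one_le_exp {A B : ℝ} (hA : 0 ≤ A) (hB : 0 ≤ B) :
    ∃ C : ℝ, 0 < C ∧ ∀ x : ℝ, 0 ≤ x → A * B ^ (⌈x⌉₊ + 1) ≤ Real.exp (C * (1 + x)) := by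
  refine ⟨A + 2 * B + 1, by positivity, fun x hx => ?_⟩
  have hceil : ((⌈x⌉₊ + 1 : ℕ) : ℝ) ≤ 2 * (1 + x) := by
    push_cast
    linarith [Nat.ceil_lt_add_one hx]
  calc A * B ^ (⌈x⌉₊ + 1) ≤ Real.exp A * Real.exp B ^ (⌈x⌉₊ + 1) := by
        gcongr
        · linarith [Real.add_one_le_exp A]
        · linarith [Real.add_one_le_exp B]
    _ = Real.exp (A + (⌈x⌉₊ + 1 : ℕ) * B) := by rw [Real.exp_add, Real.exp_nat_mul]
    _ ≤ Real.exp ((A + 2 * B + 1) * (1 + x)) := by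
        gcongr
        nlinarith

theorem stmt_17_general (α : ℂ) {ε : ℝ} (hε : 0 < ε) :
    ∃ C : ℝ, 0 < C ∧ ∃ m : ℕ, ∀ s : ℂ, (∀ l : ℕ, ε ≤ ‖s + l‖) → ∀ τ : ℂ, 1 < ‖τ‖ →
      Summable (fun j : ℕ => ‖resolventCoeff α s j * (2 * τ) ^ (-(2 * (j : ℤ)))‖) ∧
      ‖∑' j : ℕ, resolventCoeff α s j * (2 * τ) ^ (-(2 * (j : ℤ)))‖ ≤
        Real.exp (C * (1 + ‖s‖)) * (min (‖τ‖ - 1) 1) ^ (-(m : ℝ)) := by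
  obtain ⟨A, B, hA, hB, K, hcoeff⟩ := exists_norm_resolventCoeff_le α hε
  set D : ℝ := K.factorial * 2 ^ (K + 1) with hD
  obtain ⟨C, hC, hexp⟩ := exists_mul_pow_ceil_add_one_le_exp (A := A * D) (by positivity) hB
  refine ⟨C, hC, K + 1, fun s hs τ hτ => ?_⟩
  have hN : ‖s‖ + 1 ≤ (⌈‖s‖⌉₊ + 1 : ℕ) := mod_cast add_le_add_left (Nat.le_ceil ‖s‖) 1
  have hμ : 0 ≤ min (‖τ‖ - 1) 1 := le_min (sub_nonneg.mpr hτ.le) zero_le_one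
  obtain ⟨hsummable, hle⟩ := summable_norm_and_norm_tsum_mul_zpow_le (by positivity)
    (fun j => hcoeff s _ j hs hN) hτ
  refine ⟨hsummable, hle.trans ?_⟩
  rw [Real.rpow_neg hμ, Real.rpow_natCast, ← hD, mul_right_comm A]
  gcongr
  exact hexp _ (norm_nonneg s)

theorem le_norm_add_natCast_of_lt_infDist_polesSet {n : ℕ} {ε : ℝ} {s : ℂ}
    (hs : ε < Metric.infDist s (polesSet n)) (l : ℕ) : ε ≤ ‖s + l‖ := by
  simpa [dist_eq_norm] using hs.le.trans
    (Metric.infDist_le_dist_of_mem (x := s) (y := -(l : ℂ)) (Or.inr ⟨l, rfl⟩))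

theorem stmt_17 (n : ℕ) (ε : ℝ) (hε : 0 < ε) :
    ∃ C : ℝ, 0 < C ∧ ∃ m : ℕ, ∀ s : ℂ, ε < Metric.infDist s (polesSet n) →
      ∀ τ : ℂ, 1 < ‖τ‖ →
        Summable (fun j : ℕ =>
          ‖Complex.Gamma (s + 2 * j) /
              (Complex.Gamma (s - n / 2 + 1 + j) * Complex.Gamma ((j : ℂ) + 1)) *
            (2 * τ) ^ (-(2 * (j : ℤ)))‖) ∧
        ‖∑' j : ℕ, Complex.Gamma (s + 2 * j) /
              (Complex.Gamma (s - n / 2 + 1 + j) * Complex.Gamma ((j : ℂ) + 1)) *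
            (2 * τ) ^ (-(2 * (j : ℤ)))‖ ≤
          Real.exp (C * (1 + ‖s‖)) * (min (‖τ‖ - 1) 1) ^ (-(m : ℝ)) := by
  obtain ⟨C, hC, m, hbound⟩ := stmt_17_general (n / 2) hε
  exact ⟨C, hC, m, fun s hs => hbound s (le_norm_add_natCast_of_lt_infDist_polesSet hs)⟩
end
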